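/- Let n ≥ 3 and let f be a spherically symmetric function on ℝⁿ whose Fourier transform satisfies f̂(ξ) = φ(|ξ|) for a fixed smooth bump function φ supported in the interval (1/2, 2). Then for every nonnegative integer M there is a constant C_M (depending on M, n, φ) such that |e^{it√(−Δ)}f(x)| ≤ C_M (1 + |t|)^{−(n−1)/2} (1 + | |t| − |x| |)^{−M} for all t ∈ ℝ and x ∈ ℝⁿ. -/

import Mathlib

open MeasureTheory Real Complex ENNReal
open scoped FourierTransform RealInnerProductSpace ComplexConjugate

noncomputable section

/-- Euclidean space `ℝⁿ`. -/
abbrev Eucl (n : ℕ) := EuclideanSpace ℝ (Fin n)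

/-- A function on `ℝⁿ` is unit frequency if its Fourier transform is supported
in the annulus `1/2 < ‖ξ‖ < 2`. -/
def UnitFrequency {n : ℕ} (f : Eucl n → ℂ) : Prop :=
  ∀ ξ : Eucl n, 𝓕 f ξ ≠ 0 → 1 / 2 < ‖ξ‖ ∧ ‖ξ‖ < 2

/-- The half-wave propagator `e^{it√(−Δ)} f (x) = ∫ e^{2πit|ξ|} e^{2πi x·ξ} f̂(ξ) dξ`. -/
def waveProp {n : ℕ} (f : Eucl n → ℂ) (t : ℝ) (x : Eucl n) : ℂ :=
  ∫ ξ : Eucl n,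
    Complex.exp (2 * (π : ℂ) * Complex.I * (t : ℂ) * (‖ξ‖ : ℂ)) *
      Complex.exp (2 * (π : ℂ) * Complex.I * ((⟪x, ξ⟫ : ℝ) : ℂ)) * 𝓕 f ξ

/-- The mixed space-time norm `‖u‖_{L^q_t(L^r_x)}`. -/
def mixedNorm {n : ℕ} (q r : ℝ≥0∞) (u : ℝ → Eucl n → ℂ) : ℝ≥0∞ :=
  if q = ∞ then essSup (fun t : ℝ => eLpNorm (u t) r volume) volume
  else (∫⁻ t : ℝ, eLpNorm (u t) r volume ^ q.toReal) ^ (1 / q.toReal)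

/-- Time derivative of a space-time function. -/
def timeDeriv {n : ℕ} (u : ℝ → Eucl n → ℂ) (t : ℝ) (x : Eucl n) : ℂ :=
  deriv (fun s => u s x) t

/-- The spatial Laplacian `Δf(x) = Σᵢ ∂²f/∂xᵢ²`. -/
def lapE {n : ℕ} (f : Eucl n → ℂ) (x : Eucl n) : ℂ :=
  ∑ i : Fin n,
    fderiv ℝ (fun y => fderiv ℝ f y (EuclideanSpace.single i (1 : ℝ))) x
      (EuclideanSpace.single i (1 : ℝ))

/-- `u` is a (classical, smooth) solution of the wave equation `□u = −∂ₜ²u + Δu = 0`. -/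
def IsWaveSolution {n : ℕ} (u : ℝ → Eucl n → ℂ) : Prop :=
  ContDiff ℝ (⊤ : ℕ∞) (fun p : ℝ × Eucl n => u p.1 p.2) ∧
    ∀ t x, timeDeriv (timeDeriv u) t x = lapE (u t) x

/-- A spherically symmetric (radial) function. -/
def IsRadial {n : ℕ} (f : Eucl n → ℂ) : Prop :=
  ∀ x y : Eucl n, ‖x‖ = ‖y‖ → f x = f y

/-- The homogeneous Sobolev norm `‖f‖_{Ḣ^γ} = ‖ |ξ|^γ f̂ ‖_{L²}`. -/
def homSobolevNorm {n : ℕ} (γ : ℝ) (f : Eucl n → ℂ) : ℝ≥0∞ :=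
  eLpNorm (fun ξ : Eucl n => ((‖ξ‖ ^ γ : ℝ) : ℂ) * 𝓕 f ξ) 2 volume

/-- `H` is (the extension of) a spherical harmonic of degree `l` on `ℝⁿ`:
a smooth, harmonic, degree-`l` homogeneous function. -/
def IsSphericalHarmonic (n l : ℕ) (H : Eucl n → ℂ) : Prop :=
  ContDiff ℝ (⊤ : ℕ∞) H ∧ (∀ (c : ℝ) (x : Eucl n), H (c • x) = (c : ℂ) ^ l * H x) ∧
    ∀ x, lapE H x = 0

/-- A function is localized at angular frequency `N` if its spherical harmonic
expansion only involves degrees `l` with `N/2 ≤ l ≤ 4N`. -/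
def AngularlyLocalized (n N : ℕ) (f : Eucl n → ℂ) : Prop :=
  ∃ (I : Finset (ℕ × ℕ)) (Y : ℕ × ℕ → Eucl n → ℂ) (c : ℕ × ℕ → ℝ → ℂ),
    (∀ p ∈ I, ((N : ℝ) / 2 ≤ (p.1 : ℝ) ∧ (p.1 : ℝ) ≤ 4 * N) ∧
      IsSphericalHarmonic n p.1 (Y p)) ∧
    ∀ x : Eucl n, x ≠ 0 → f x = ∑ p ∈ I, c p ‖x‖ * Y p (‖x‖⁻¹ • x)

/-- The normalized surface measure on the unit sphere `S^{n-1} ⊆ ℝⁿ`. -/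
def unitSphereMeasure (n : ℕ) : Measure (Metric.sphere (0 : Eucl n) 1) :=
  (((volume : Measure (Eucl n)).toSphere Set.univ)⁻¹) • (volume : Measure (Eucl n)).toSphere

/-- An `L²`-type spherical harmonics expansion of a function `f` on `ℝⁿ`, with an
orthonormal family of spherical harmonics. -/
structure SphExpansion (n : ℕ) (f : Eucl n → ℂ) where
  /-- number of harmonics used in each degree -/
  d : ℕ → ℕ
  /-- the orthonormal family of spherical harmonics, `Y (l,i)` of degree `l` -/
  Y : ℕ × ℕ → Eucl n → ℂ
  /-- the (radial) coefficients -/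
  c : ℕ × ℕ → ℝ → ℂ
  harmonic : ∀ p : ℕ × ℕ, p.2 < d p.1 → IsSphericalHarmonic n p.1 (Y p)
  coeff_zero : ∀ p : ℕ × ℕ, ¬p.2 < d p.1 → ∀ r : ℝ, c p r = 0
  orthonormal : ∀ p q : ℕ × ℕ, p.2 < d p.1 → q.2 < d q.1 →
    ∫ ω : Metric.sphere (0 : Eucl n) 1,
        Y p (ω : Eucl n) * conj (Y q (ω : Eucl n)) ∂(unitSphereMeasure n) =
      if p = q then 1 else 0
  expand : ∀ x : Eucl n, x ≠ 0 →
    f x = ∑' p : ℕ × ℕ, c p ‖x‖ * Y p (‖x‖⁻¹ • x)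

/-- The fractional angular derivative `|Ω|^s f = Σ [l(n+l−2)]^{s/2} c^l_i Y^l_i`,
computed from a spherical harmonics expansion of `f`. -/
def SphExpansion.omegaPow {n : ℕ} {f : Eucl n → ℂ} (e : SphExpansion n f) (s : ℝ) :
    Eucl n → ℂ := fun x =>
  ∑' p : ℕ × ℕ,
    ((((p.1 * (n + p.1 - 2) : ℕ) : ℝ) ^ (s / 2) : ℝ) : ℂ) * e.c p ‖x‖ * e.Y p (‖x‖⁻¹ • x)

/-- The Bessel function of order `s`, given by the integral formula
`J_s(y) = ((−i)^s/(4π)) ∫_{−2π}^{2π} e^{iy cos θ} e^{−isθ} dθ`. -/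
def besselJ (s : ℝ) (y : ℝ) : ℂ :=
  (-Complex.I) ^ (s : ℂ) / (4 * (π : ℂ)) *
    ∫ θ in (-(2 * π) : ℝ)..(2 * π),
      Complex.exp (Complex.I * ((y * Real.cos θ : ℝ) : ℂ)) *
        Complex.exp (-(Complex.I * (s : ℂ) * (θ : ℂ)))

/-- The Hankel–φ wave packet `ψ^l_m(r) = ∫_0^∞ J_{(n−2)/2+l}(2πrρ) e^{−2πimρ} χ(ρ) dρ`. -/
def hankelPsi (n : ℕ) (χ : ℝ → ℝ) (l : ℕ) (m r : ℝ) : ℂ :=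
  ∫ ρ in Set.Ioi (0 : ℝ),
    besselJ (((n : ℝ) - 2) / 2 + l) (2 * π * r * ρ) *
      Complex.exp (-(2 * (π : ℂ) * Complex.I * (m : ℂ) * (ρ : ℂ))) * ((χ ρ : ℝ) : ℂ)

/-- `Q` is a partition of `ℝⁿ` into (axis-parallel, half-open) cubes of side length `∼ L`. -/
def IsCubePartition {ι : Type} (n : ℕ) (L : ℝ) (Q : ι → Set (Eucl n)) : Prop :=
  (∀ x : Eucl n, ∃! i : ι, x ∈ Q i) ∧
    ∀ i : ι, ∃ (a : Eucl n) (s : ℝ), L / 2 ≤ s ∧ s ≤ 2 * L ∧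
      Q i = {x : Eucl n | ∀ j : Fin n, a j ≤ x j ∧ x j < a j + s}

/-- The coarse scale norm `(Σ_α ‖f‖_{L²(Q_α)}^r)^{1/r}` over a family of cubes. -/
def cubeNorm {ι : Type} {n : ℕ} (Q : ι → Set (Eucl n)) (r : ℝ≥0∞) (f : Eucl n → ℂ) :
    ℝ≥0∞ :=
  if r = ∞ then ⨆ i : ι, eLpNorm f 2 (volume.restrict (Q i))
  else (∑' i : ι, eLpNorm f 2 (volume.restrict (Q i)) ^ r.toReal) ^ (1 / r.toReal)

/-- The squared length of the spatial gradient, `|∇f(x)|² = Σᵢ |∂ᵢf(x)|²`. -/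
def gradSq {n : ℕ} (f : Eucl n → ℂ) (x : Eucl n) : ℝ :=
  ∑ i : Fin n, ‖fderiv ℝ f x (EuclideanSpace.single i (1 : ℝ))‖ ^ 2

/-- The squared radial derivative `|∂_r f(x)|² = |(x/|x|)·∇f(x)|²`. -/
def radSq {n : ℕ} (f : Eucl n → ℂ) (x : Eucl n) : ℝ :=
  ‖fderiv ℝ f x (‖x‖⁻¹ • x)‖ ^ 2

end

/-!
Writing `G = 𝓕⁻ (ρ ^ (n - 1) φ(ρ))`, integration over spheres gives
`e^{it√(-Δ)} f (x) = c ∫_{-1}^1 (1 - s²) ^ ((n - 3) / 2) G (t + |x| s) ds`. The substitution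
`y = t + |x| s` turns this into `∫ (|x|² - (t - y)²)₊ ^ ((n - 3) / 2) G (y) dy` up to a power of
`|x|`. Since `φ` vanishes near the origin, all moments of `G` vanish, so any polynomial in `y` may
be subtracted from the weight. Where `|x| - |t| ≥ 1`, a Taylor polynomial of the weight at `y = 0`
leaves a remainder that gains arbitrary powers of `(1 + ||t| - |x||)⁻¹`; everywhere else the rapid
decay of `G` suffices.
-/

open Filter Topology Polynomial SchwartzMap

/-- The truncated power `x₊ ^ α`. The case split makes `α = 0` the indicator function of
`[0, ∞)`, whereas `max x 0 ^ 0 = 1` for all `x`. -/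
noncomputable def truncPow (α x : ℝ) : ℝ := if 0 ≤ x then x ^ α else 0

section TruncPow

variable {α x y : ℝ}

lemma truncPow_of_nonneg (hx : 0 ≤ x) : truncPow α x = x ^ α := if_pos hx

lemma truncPow_of_neg (hx : x < 0) : truncPow α x = 0 := if_neg hx.not_ge

lemma truncPow_nonneg : 0 ≤ truncPow α x := by
  unfold truncPow
  split_ifs with hx
  exacts [rpow_nonneg hx α, le_rfl]

lemma measurable_truncPow : Measurable (truncPow α) :=
  Measurable.ite measurableSet_Ici (measurable_id.pow_const α) measurable_const

lemma truncPow_le_rpow (hα : 0 ≤ α) (hy : 0 ≤ y) (h : x ≤ y) : truncPow α x ≤ y ^ α := by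
  rcases le_or_gt 0 x with hx | hx
  · rw [truncPow_of_nonneg hx]
    exact rpow_le_rpow hx h hα
  · rw [truncPow_of_neg hx]
    exact rpow_nonneg hy α

lemma truncPow_mul (hx : 0 < x) : truncPow α (x * y) = x ^ α * truncPow α y := by
  rcases le_or_gt 0 y with hy | hy
  · rw [truncPow_of_nonneg hy, truncPow_of_nonneg (mul_nonneg hx.le hy), mul_rpow hx.le hy]
  · rw [truncPow_of_neg hy, truncPow_of_neg (mul_neg_of_pos_of_neg hx hy), mul_zero]

lemma truncPow_mul_truncPow (h : 0 < x ∨ 0 < y) :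
    truncPow α (x * y) = truncPow α x * truncPow α y := by
  rcases h with h | h
  · rw [truncPow_mul h, truncPow_of_nonneg h.le]
  · rw [mul_comm, truncPow_mul h, truncPow_of_nonneg h.le, mul_comm]

lemma rpow_le_pow {K : ℕ} (hx : 1 ≤ x) (hK : α ≤ K) : x ^ α ≤ x ^ K := by
  simpa only [Real.rpow_natCast] using rpow_le_rpow_of_exponent_le hx hK

lemma truncPow_one_add_le (hα : 0 ≤ α) {K : ℕ} (hK : α ≤ K) :
    truncPow α (1 + x) ≤ (1 + |x|) ^ K := by
  calc truncPow α (1 + x) ≤ (1 + |x|) ^ α :=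
        truncPow_le_rpow hα (by positivity) (by gcongr; exact le_abs_self x)
    _ ≤ (1 + |x|) ^ K := rpow_le_pow (le_add_of_nonneg_right (abs_nonneg x)) hK

lemma analyticAt_truncPow_one_add : AnalyticAt ℝ (fun x ↦ truncPow α (1 + x)) 0 := by
  refine (one_add_rpow_hasFPowerSeriesAt_zero (a := α)).analyticAt.congr ?_
  filter_upwards [lt_mem_nhds (show (-1 : ℝ) < 0 by norm_num)] with x hx
  exact (truncPow_of_nonneg (by linarith)).symm

end TruncPow

section Approximation

lemma exists_polynomial_isBigO_sub {f : ℝ → ℝ} (hf : AnalyticAt ℝ f 0) (K : ℕ) :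
    ∃ p : ℝ[X], p.natDegree ≤ K ∧ (fun x ↦ f x - p.eval x) =O[𝓝 0] fun x ↦ x ^ K := by
  obtain ⟨s, hs⟩ := hf
  refine ⟨∑ i ∈ Finset.range K, C (s.coeff i) * X ^ i, ?_, ?_⟩
  · exact natDegree_sum_le_of_forall_le _ _ fun i hi ↦
      (natDegree_C_mul_X_pow_le _ _).trans (Finset.mem_range.1 hi).le
  · refine ((hs.isBigO_sub_partialSum_pow K).congr_left fun x ↦ ?_).trans
      (Asymptotics.isBigO_of_le _ fun x ↦ ?_)
    · simp only [zero_add, FormalMultilinearSeries.partialSum,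
        FormalMultilinearSeries.apply_eq_pow_smul_coeff, eval_finsetSum, eval_C_mul, eval_X_pow,
        smul_eq_mul, mul_comm (s.coeff _)]
    · simp only [norm_pow, norm_norm, le_refl]

lemma exists_abs_eval_le_mul_one_add_abs_pow (p : ℝ[X]) {K : ℕ} (hp : p.natDegree ≤ K) :
    ∃ C, 0 ≤ C ∧ ∀ x, |p.eval x| ≤ C * (1 + |x|) ^ K := by
  refine ⟨∑ i ∈ Finset.range (K + 1), |p.coeff i|, by positivity, fun x ↦ ?_⟩
  rw [eval_eq_sum_range' (Nat.lt_succ_of_le hp), Finset.sum_mul]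
  refine (Finset.abs_sum_le_sum_abs _ _).trans (Finset.sum_le_sum fun i hi ↦ ?_)
  rw [abs_mul, abs_pow]
  have h1 : 1 ≤ 1 + |x| := le_add_of_nonneg_right (abs_nonneg x)
  calc |p.coeff i| * |x| ^ i ≤ |p.coeff i| * (1 + |x|) ^ i := by gcongr; linarith
    _ ≤ |p.coeff i| * (1 + |x|) ^ K := by
        gcongr
        exact Nat.lt_succ_iff.1 (Finset.mem_range.1 hi)

lemma exists_polynomial_abs_sub_le {f : ℝ → ℝ} (hf : AnalyticAt ℝ f 0) {K : ℕ} {B : ℝ}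
    (hB : ∀ x, |f x| ≤ B * (1 + |x|) ^ K) :
    ∃ (p : ℝ[X]) (C : ℝ), 0 ≤ C ∧ ∀ x, |f x - p.eval x| ≤ C * |x| ^ K := by
  obtain ⟨p, hdeg, hO⟩ := exists_polynomial_isBigO_sub hf K
  obtain ⟨C₁, hC₁, hnear⟩ := hO.exists_pos
  obtain ⟨ε, hε, hball⟩ := Metric.eventually_nhds_iff.1 hnear.bound
  obtain ⟨C₂, hC₂, hp⟩ := exists_abs_eval_le_mul_one_add_abs_pow p hdeg
  have hB0 : 0 ≤ B := by simpa using (abs_nonneg _).trans (hB 0)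
  refine ⟨p, C₁ + (B + C₂) * (ε⁻¹ + 1) ^ K, by positivity, fun x ↦ ?_⟩
  rcases lt_or_ge |x| ε with hx | hx
  · calc |f x - p.eval x| ≤ C₁ * |x| ^ K := by
          simpa only [norm_eq_abs, abs_pow] using hball (by simpa using hx)
      _ ≤ _ := by gcongr; exact le_add_of_nonneg_right (by positivity)
  · have hfar : 1 + |x| ≤ (ε⁻¹ + 1) * |x| := by
      have : 1 ≤ ε⁻¹ * |x| := by rwa [← div_eq_inv_mul, one_le_div hε]
      linarith
    calc |f x - p.eval x| ≤ B * (1 + |x|) ^ K + C₂ * (1 + |x|) ^ K :=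
          (abs_sub _ _).trans (add_le_add (hB x) (hp x))
      _ = (B + C₂) * (1 + |x|) ^ K := (add_mul _ _ _).symm
      _ ≤ (B + C₂) * ((ε⁻¹ + 1) * |x|) ^ K := by gcongr
      _ = (B + C₂) * (ε⁻¹ + 1) ^ K * |x| ^ K := by rw [mul_pow, mul_assoc]
      _ ≤ _ := by gcongr; exact le_add_of_nonneg_left hC₁.le

lemma abs_mul_sub_mul_le {a b p q A e : ℝ} (ha : |a| ≤ A) (hb : |b| ≤ A) (hp : |a - p| ≤ e)
    (hq : |b - q| ≤ e) : |a * b - p * q| ≤ e * (2 * A + e) := by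
  have he : 0 ≤ e := (abs_nonneg _).trans hp
  have hqA : |q| ≤ A + e := by
    calc |q| = |b - (b - q)| := by ring_nf
      _ ≤ A + e := (abs_sub _ _).trans (add_le_add hb hq)
  calc |a * b - p * q| = |a * (b - q) + (a - p) * q| := by ring_nf
    _ ≤ |a| * |b - q| + |a - p| * |q| := by
        simpa only [abs_mul] using abs_add_le (a * (b - q)) ((a - p) * q)
    _ ≤ A * e + e * (A + e) := by gcongr; exact (abs_nonneg _).trans ha
    _ = e * (2 * A + e) := by ring

lemma exists_polynomial_abs_truncPow_mul_truncPow_sub_le {α : ℝ} (hα : 0 ≤ α) {K : ℕ}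
    (hK : α ≤ K) : ∃ (p : ℝ[X]) (C : ℝ), 0 ≤ C ∧ ∀ x y z, |x| ≤ z → |y| ≤ z →
      |truncPow α (1 + x) * truncPow α (1 + y) - p.eval x * p.eval y|
        ≤ C * z ^ K * (1 + z) ^ K := by
  have hgrowth : ∀ x, |truncPow α (1 + x)| ≤ 1 * (1 + |x|) ^ K := fun x ↦ by
    rw [abs_of_nonneg truncPow_nonneg, one_mul]
    exact truncPow_one_add_le hα hK
  obtain ⟨p, C, hC, hp⟩ := exists_polynomial_abs_sub_le analyticAt_truncPow_one_add hgrowth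
  refine ⟨p, C * (2 + C), by positivity, fun x y z hx hy ↦ ?_⟩
  have hz : 0 ≤ z := (abs_nonneg x).trans hx
  have hbound : ∀ u, |u| ≤ z → |truncPow α (1 + u)| ≤ (1 + z) ^ K := fun u hu ↦
    (hgrowth u).trans (by rw [one_mul]; gcongr)
  have herror : ∀ u, |u| ≤ z → |truncPow α (1 + u) - p.eval u| ≤ C * z ^ K := fun u hu ↦
    (hp u).trans (by gcongr)
  calc _ ≤ C * z ^ K * (2 * (1 + z) ^ K + C * z ^ K) :=
        abs_mul_sub_mul_le (hbound x hx) (hbound y hy) (herror x hx) (herror y hy)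
    _ ≤ C * z ^ K * (2 * (1 + z) ^ K + C * (1 + z) ^ K) := by gcongr; linarith
    _ = C * (2 + C) * z ^ K * (1 + z) ^ K := by ring

lemma truncPow_sub_mul_add {α A B : ℝ} (hA : 0 < A) (hB : 0 < B) (y : ℝ) :
    truncPow α ((A - y) * (B + y))
      = (A * B) ^ α * (truncPow α (1 + -A⁻¹ * y) * truncPow α (1 + B⁻¹ * y)) := by
  rw [← truncPow_mul_truncPow, ← truncPow_mul (mul_pos hA hB)]
  · congr 1
    field_simp
    ring
  · rcases le_total 0 y with hy | hy
    · exact Or.inr (by positivity)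
    · have : 0 ≤ A⁻¹ * -y := mul_nonneg (inv_nonneg.2 hA.le) (neg_nonneg.2 hy)
      exact Or.inl (by linarith)

lemma exists_polynomial_abs_truncPow_sub_mul_add_sub_le {α : ℝ} (hα : 0 ≤ α) {K : ℕ}
    (hK : α ≤ K) : ∃ C, 0 ≤ C ∧ ∀ A B d, 1 ≤ d → d ≤ A → d ≤ B → ∃ q : ℝ[X], ∀ y,
      |truncPow α ((A - y) * (B + y)) - q.eval y|
        ≤ C * (A * B) ^ α * ((1 + |y|) ^ (2 * K) / d ^ K) := by
  obtain ⟨p, C, hC, hp⟩ := exists_polynomial_abs_truncPow_mul_truncPow_sub_le hα hK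
  refine ⟨C, hC, fun A B d hd hA hB ↦ ?_⟩
  have hd0 : 0 < d := one_pos.trans_le hd
  have hA0 : 0 < A := hd0.trans_le hA
  have hB0 : 0 < B := hd0.trans_le hB
  refine ⟨.C ((A * B) ^ α) * (p.comp (.C (-A⁻¹) * X) * p.comp (.C B⁻¹ * X)), fun y ↦ ?_⟩
  have hzA : |-A⁻¹ * y| ≤ |y| / d := by
    rw [neg_mul, abs_neg, abs_mul, abs_of_pos (inv_pos.2 hA0), ← div_eq_inv_mul]
    gcongr
  have hzB : |B⁻¹ * y| ≤ |y| / d := by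
    rw [abs_mul, abs_of_pos (inv_pos.2 hB0), ← div_eq_inv_mul]
    gcongr
  simp only [truncPow_sub_mul_add hA0 hB0, eval_mul, eval_C, eval_comp, eval_X, ← mul_sub,
    abs_mul _ (_ - _), abs_of_nonneg (rpow_nonneg (mul_pos hA0 hB0).le α)]
  calc _ ≤ (A * B) ^ α * (C * (|y| / d) ^ K * (1 + |y| / d) ^ K) := by
        gcongr
        exact hp _ _ _ hzA hzB
    _ ≤ (A * B) ^ α * (C * ((1 + |y|) / d) ^ K * (1 + |y|) ^ K) := by
        gcongr
        exacts [le_add_of_nonneg_left zero_le_one, div_le_self (abs_nonneg y) hd]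
    _ = C * (A * B) ^ α * ((1 + |y|) ^ (2 * K) / d ^ K) := by
        rw [div_pow]; ring

end Approximation

section LightCone

lemma exists_polynomial_abs_truncPow_sub_le_of_one_le_sub {α : ℝ} (hα : 0 ≤ α) (N : ℕ) :
    ∃ (C : ℝ) (L : ℕ), 0 ≤ C ∧ ∀ t r, 1 ≤ r - |t| → ∃ q : ℝ[X], ∀ y,
      |truncPow α (r ^ 2 - (t - y) ^ 2) - q.eval y|
        ≤ C * r ^ α * ((1 + |y|) ^ L / (1 + |(|t| - r)|) ^ N) := by
  obtain ⟨C, hC, hq⟩ := exists_polynomial_abs_truncPow_sub_mul_add_sub_le hα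
    (K := N + ⌈α⌉₊) ((Nat.le_ceil α).trans (by push_cast; linarith [N.cast_nonneg (α := ℝ)]))
  refine ⟨C * 2 ^ α * 2 ^ N, 2 * (N + ⌈α⌉₊), by positivity, fun t r hd ↦ ?_⟩
  obtain ⟨ht, ht'⟩ := abs_le.1 (le_refl |t|)
  obtain ⟨q, hq⟩ := hq (r + t) (r - t) (r - |t|) hd (by linarith) (by linarith)
  refine ⟨q, fun y ↦ ?_⟩
  have hr : 0 < r := by linarith [abs_nonneg t]
  set d := r - |t| with hd_def
  have hd0 : 0 < d := one_pos.trans_le hd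
  have hAB0 : 0 ≤ (r + t) * (r - t) := mul_nonneg (by linarith) (by linarith)
  have hAB : (r + t) * (r - t) ≤ 2 * r * d := by
    calc (r + t) * (r - t) = (r + |t|) * d := by rw [hd_def, ← sq_sub_sq, ← sq_sub_sq, sq_abs]
      _ ≤ 2 * r * d := by gcongr; linarith
  have hpow : ((r + t) * (r - t)) ^ α ≤ 2 ^ α * r ^ α * d ^ ⌈α⌉₊ := by
    calc ((r + t) * (r - t)) ^ α ≤ (2 * r * d) ^ α := by gcongr
      _ = 2 ^ α * r ^ α * d ^ α := by
          rw [mul_rpow (by positivity) hd0.le, mul_rpow zero_le_two hr.le]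
      _ ≤ 2 ^ α * r ^ α * d ^ ⌈α⌉₊ := by
          gcongr
          exact rpow_le_pow hd (Nat.le_ceil α)
  have hD : 1 + |(|t| - r)| ≤ 2 * d := by
    rw [abs_sub_comm, abs_of_pos hd0]
    linarith
  calc |truncPow α (r ^ 2 - (t - y) ^ 2) - q.eval y|
      = |truncPow α ((r + t - y) * (r - t + y)) - q.eval y| := by ring_nf
    _ ≤ C * (2 ^ α * r ^ α * d ^ ⌈α⌉₊) * ((1 + |y|) ^ (2 * (N + ⌈α⌉₊)) / d ^ (N + ⌈α⌉₊)) :=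
        (hq y).trans (by gcongr)
    _ = C * 2 ^ α * 2 ^ N * r ^ α * ((1 + |y|) ^ (2 * (N + ⌈α⌉₊)) / (2 * d) ^ N) := by
        rw [pow_add d, mul_pow]
        field_simp
    _ ≤ _ := by gcongr

lemma truncPow_le_of_sub_lt_one {α : ℝ} (hα : 0 ≤ α) (N : ℕ) {t r : ℝ} (hr : 0 < r)
    (hd : r - |t| < 1) (y : ℝ) :
    truncPow α (r ^ 2 - (t - y) ^ 2)
      ≤ 2 ^ α * 2 ^ N * r ^ α * ((1 + |y|) ^ (N + ⌈α⌉₊) / (1 + |(|t| - r)|) ^ N) := by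
  rcases lt_or_ge (r ^ 2 - (t - y) ^ 2) 0 with hneg | hnonneg
  · rw [truncPow_of_neg hneg]
    positivity
  have hty : |t - y| ≤ r := abs_le_of_sq_le_sq (by linarith) hr.le
  have htr : |t| ≤ r + |y| := by linarith [abs_sub_abs_le_abs_sub t y]
  have hy : 0 ≤ |y| := abs_nonneg y
  have hD : 1 + |(|t| - r)| ≤ 2 * (1 + |y|) := by
    have : |(|t| - r)| ≤ 1 + |y| := abs_le.2 ⟨by linarith, by linarith⟩
    linarith
  have hle : r ^ 2 - (t - y) ^ 2 ≤ 2 * r * (1 + |y|) := by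
    have : r - |t - y| ≤ 1 + |y| := by linarith [abs_sub_abs_le_abs_sub t y]
    calc r ^ 2 - (t - y) ^ 2 = (r + |t - y|) * (r - |t - y|) := by rw [← sq_abs (t - y), sq_sub_sq]
      _ ≤ 2 * r * (1 + |y|) := by gcongr; linarith
  have hone : 1 ≤ (2 * (1 + |y|)) ^ N / (1 + |(|t| - r)|) ^ N := by
    rw [one_le_div (by positivity)]
    gcongr
  calc truncPow α (r ^ 2 - (t - y) ^ 2) ≤ (2 * r * (1 + |y|)) ^ α :=
        truncPow_le_rpow hα (by positivity) hle
    _ = 2 ^ α * r ^ α * (1 + |y|) ^ α := by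
        rw [mul_rpow (by positivity) (by positivity), mul_rpow zero_le_two hr.le]
    _ ≤ 2 ^ α * r ^ α * (1 + |y|) ^ ⌈α⌉₊ := by
        gcongr
        exact rpow_le_pow (by linarith) (Nat.le_ceil α)
    _ ≤ 2 ^ α * r ^ α * (1 + |y|) ^ ⌈α⌉₊ * ((2 * (1 + |y|)) ^ N / (1 + |(|t| - r)|) ^ N) :=
        le_mul_of_one_le_right (by positivity) hone
    _ = _ := by rw [mul_pow, pow_add]; ring

lemma exists_polynomial_abs_truncPow_sub_le {α : ℝ} (hα : 0 ≤ α) (N : ℕ) :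
    ∃ (C : ℝ) (L : ℕ), 0 ≤ C ∧ ∀ t r, 0 < r → ∃ q : ℝ[X], ∀ y,
      |truncPow α (r ^ 2 - (t - y) ^ 2) - q.eval y|
        ≤ C * r ^ α * ((1 + |y|) ^ L / (1 + |(|t| - r)|) ^ N) := by
  obtain ⟨C, L, hC, hq⟩ := exists_polynomial_abs_truncPow_sub_le_of_one_le_sub hα N
  refine ⟨C + 2 ^ α * 2 ^ N, max L (N + ⌈α⌉₊), by positivity, fun t r hr ↦ ?_⟩
  have hy : ∀ y : ℝ, 1 ≤ 1 + |y| := fun y ↦ le_add_of_nonneg_right (abs_nonneg y)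
  rcases le_or_gt 1 (r - |t|) with hd | hd
  · obtain ⟨q, hq⟩ := hq t r hd
    refine ⟨q, fun y ↦ (hq y).trans ?_⟩
    gcongr
    exacts [le_add_of_nonneg_right (by positivity), hy y, le_max_left _ _]
  · refine ⟨0, fun y ↦ ?_⟩
    rw [eval_zero, sub_zero, abs_of_nonneg truncPow_nonneg]
    refine (truncPow_le_of_sub_lt_one hα N hr hd y).trans ?_
    gcongr
    exacts [le_add_of_nonneg_left hC, hy y, le_max_right _ _]

end LightCone

section GegenbauerMean

variable {E : Type*} [NormedAddCommGroup E] [NormedSpace ℝ E]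

/-- The mean of `G` over the interval of radius `r` about `t` against the (unnormalized)
Gegenbauer weight `(1 - s²) ^ α`, the density of a coordinate of a point on a sphere. -/
noncomputable def gegenbauerMean (α : ℝ) (G : ℝ → E) (t r : ℝ) : E :=
  ∫ s in (-1 : ℝ)..1, (1 - s ^ 2) ^ α • G (t + r * s)

lemma gegenbauerMean_eq_integral_truncPow (α : ℝ) (G : ℝ → E) (t : ℝ) {r : ℝ} (hr : 0 < r) :
    gegenbauerMean α G t r
      = r ^ (-(2 * α + 1)) • ∫ y, truncPow α (r ^ 2 - (t - y) ^ 2) • G y := by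
  have hmean : gegenbauerMean α G t r = ∫ s, truncPow α (1 - s ^ 2) • G (t + r * s) := by
    rw [gegenbauerMean, intervalIntegral.integral_of_le (by norm_num),
      ← integral_Icc_eq_integral_Ioc, ← integral_indicator measurableSet_Icc]
    congr 1 with s
    by_cases hs : s ∈ Set.Icc (-1 : ℝ) 1
    · rw [Set.indicator_of_mem hs, truncPow_of_nonneg]
      exact sub_nonneg.2 ((sq_le_one_iff_abs_le_one s).2 (abs_le.2 hs))
    · rw [Set.indicator_of_notMem hs, truncPow_of_neg, zero_smul]
      exact sub_neg.2 ((one_lt_sq_iff_one_lt_abs s).2 (not_le.1 (hs ∘ abs_le.1)))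
  have hscale : ∀ s, truncPow α (r ^ 2 - (t - (t + r * s)) ^ 2)
      = r ^ (2 * α) * truncPow α (1 - s ^ 2) := fun s ↦ by
    rw [rpow_mul hr.le, Real.rpow_two, ← truncPow_mul (pow_pos hr 2)]
    ring_nf
  have hsubst := Measure.integral_comp_mul_left
    (fun u ↦ truncPow α (r ^ 2 - (t - (t + u)) ^ 2) • G (t + u)) r
  rw [integral_add_left_eq_self (fun y ↦ truncPow α (r ^ 2 - (t - y) ^ 2) • G y) t,
    abs_of_pos (inv_pos.2 hr)] at hsubst
  simp only [hscale, mul_smul, integral_smul] at hsubst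
  rw [hmean, neg_add, rpow_add hr, mul_smul, Real.rpow_neg_one, ← hsubst, smul_smul,
    rpow_neg hr.le, inv_mul_cancel₀ (rpow_pos_of_pos hr _).ne', one_smul]

lemma exists_norm_le_div_one_add_abs_pow (G : 𝓢(ℝ, E)) (N : ℕ) :
    ∃ C, 0 ≤ C ∧ ∀ y, ‖G y‖ ≤ C / (1 + |y|) ^ N := by
  obtain ⟨C, hC⟩ : ∃ C, ∀ y, (1 + |y|) ^ N * ‖G y‖ ≤ C := ⟨_, fun y ↦ by
    simpa using SchwartzMap.one_add_le_sup_seminorm_apply (𝕜 := ℝ) (m := (N, 0)) le_rfl le_rfl G y⟩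
  have hC0 : 0 ≤ C := le_trans (by positivity) (hC 0)
  exact ⟨C, hC0, fun y ↦ (le_div_iff₀' (by positivity)).2 (hC y)⟩

lemma integrable_one_add_abs_pow_mul_norm (G : 𝓢(ℝ, E)) (N : ℕ) :
    Integrable fun y ↦ (1 + |y|) ^ N * ‖G y‖ := by
  simp only [add_comm (1 : ℝ), add_pow, one_pow, mul_one, Finset.sum_mul,
    mul_right_comm _ (Nat.cast _)]
  exact integrable_finsetSum _ fun k _ ↦ (G.integrable_pow_mul volume k).mul_const _

lemma integrable_pow_smul (G : 𝓢(ℝ, E)) (k : ℕ) : Integrable fun y ↦ y ^ k • G y :=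
  (G.integrable_pow_mul volume k).mono' (by fun_prop)
    (ae_of_all _ fun y ↦ by rw [norm_smul, norm_pow])

lemma integrable_eval_smul (G : 𝓢(ℝ, E)) (q : ℝ[X]) : Integrable fun y ↦ q.eval y • G y := by
  simp only [eval_eq_sum_range, Finset.sum_smul, mul_smul]
  exact integrable_finsetSum _ fun k _ ↦ (integrable_pow_smul G k).fun_smul _

lemma integral_eval_smul_eq_zero {G : 𝓢(ℝ, E)} (hG : ∀ k : ℕ, ∫ y, y ^ k • G y = 0) (q : ℝ[X]) :
    ∫ y, q.eval y • G y = 0 := by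
  simp only [eval_eq_sum_range, Finset.sum_smul, mul_smul]
  rw [integral_finsetSum _ fun k _ ↦ (integrable_pow_smul G k).fun_smul _]
  simp only [integral_smul, hG, smul_zero, Finset.sum_const_zero]

lemma norm_integral_smul_le_of_abs_sub_eval_le {G : 𝓢(ℝ, E)}
    (hG : ∀ k : ℕ, ∫ y, y ^ k • G y = 0) {w : ℝ → ℝ} (hw : Measurable w) {q : ℝ[X]} {B : ℝ}
    {L : ℕ} (hq : ∀ y, |w y - q.eval y| ≤ B * (1 + |y|) ^ L) :
    ‖∫ y, w y • G y‖ ≤ B * ∫ y, (1 + |y|) ^ L * ‖G y‖ := by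
  have hdom : Integrable fun y ↦ B * ((1 + |y|) ^ L * ‖G y‖) :=
    (integrable_one_add_abs_pow_mul_norm G L).const_mul B
  have hbound : ∀ y, ‖(w y - q.eval y) • G y‖ ≤ B * ((1 + |y|) ^ L * ‖G y‖) := fun y ↦ by
    rw [norm_smul, ← mul_assoc]
    gcongr
    exact hq y
  have hint : Integrable fun y ↦ (w y - q.eval y) • G y :=
    hdom.mono' ((hw.sub q.continuous.measurable).aestronglyMeasurable.smul
      G.continuous.aestronglyMeasurable) (ae_of_all _ hbound)
  calc ‖∫ y, w y • G y‖ = ‖∫ y, ((w y - q.eval y) • G y + q.eval y • G y)‖ := by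
        simp only [← add_smul, sub_add_cancel]
    _ = ‖∫ y, (w y - q.eval y) • G y‖ := by
        rw [integral_add hint (integrable_eval_smul G q), integral_eval_smul_eq_zero hG, add_zero]
    _ ≤ ∫ y, B * ((1 + |y|) ^ L * ‖G y‖) := norm_integral_le_of_norm_le hdom (ae_of_all _ hbound)
    _ = _ := integral_const_mul _ _

lemma exists_norm_gegenbauerMean_le_rpow_div {α : ℝ} (hα : 0 ≤ α) {G : 𝓢(ℝ, E)}
    (hG : ∀ k : ℕ, ∫ y, y ^ k • G y = 0) (N : ℕ) :
    ∃ C, 0 ≤ C ∧ ∀ t r, 0 < r →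
      ‖gegenbauerMean α G t r‖ ≤ C * r ^ (-(α + 1)) / (1 + |(|t| - r)|) ^ N := by
  obtain ⟨C, L, hC, hq⟩ := exists_polynomial_abs_truncPow_sub_le hα N
  refine ⟨C * ∫ y, (1 + |y|) ^ L * ‖G y‖,
    mul_nonneg hC (integral_nonneg fun y ↦ by positivity), fun t r hr ↦ ?_⟩
  obtain ⟨q, hq⟩ := hq t r hr
  set D := 1 + |(|t| - r)|
  have hw : Measurable fun y ↦ truncPow α (r ^ 2 - (t - y) ^ 2) :=
    measurable_truncPow.comp (by fun_prop)
  have hle := norm_integral_smul_le_of_abs_sub_eval_le hG hw (B := C * r ^ α / D ^ N)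
    fun y ↦ (hq y).trans_eq (by ring)
  calc ‖gegenbauerMean α G t r‖
      = r ^ (-(2 * α + 1)) * ‖∫ y, truncPow α (r ^ 2 - (t - y) ^ 2) • G y‖ := by
        rw [gegenbauerMean_eq_integral_truncPow α G t hr, norm_smul,
          norm_of_nonneg (rpow_nonneg hr.le _)]
    _ ≤ r ^ (-(2 * α + 1)) * (C * r ^ α / D ^ N * ∫ y, (1 + |y|) ^ L * ‖G y‖) := by gcongr
    _ = (C * ∫ y, (1 + |y|) ^ L * ‖G y‖) * (r ^ (-(2 * α + 1)) * r ^ α) / D ^ N := by ring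
    _ = _ := by rw [← rpow_add hr]; ring_nf

lemma exists_norm_gegenbauerMean_le_div_of_two_mul_le {α : ℝ} (hα : 0 ≤ α) (G : 𝓢(ℝ, E)) (N : ℕ) :
    ∃ C, 0 ≤ C ∧ ∀ t r, 0 ≤ r → 2 * r ≤ 1 + |t| →
      ‖gegenbauerMean α G t r‖ ≤ C / (1 + |t|) ^ N := by
  obtain ⟨C, hC, hG⟩ := exists_norm_le_div_one_add_abs_pow G N
  refine ⟨C * 2 ^ N * 2, by positivity, fun t r hr hrt ↦ ?_⟩
  have hintegrand : ∀ s ∈ Set.uIoc (-1 : ℝ) 1,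
      ‖(1 - s ^ 2) ^ α • G (t + r * s)‖ ≤ C * 2 ^ N / (1 + |t|) ^ N := fun s hs ↦ by
    rw [Set.uIoc_of_le (by norm_num)] at hs
    have hs1 : |s| ≤ 1 := abs_le.2 ⟨hs.1.le, hs.2⟩
    have hs2 : 0 ≤ 1 - s ^ 2 := sub_nonneg.2 ((sq_le_one_iff_abs_le_one s).2 hs1)
    have hweight : (1 - s ^ 2) ^ α ≤ 1 := rpow_le_one hs2 (sub_le_self 1 (sq_nonneg s)) hα
    have hfar : (1 + |t|) / 2 ≤ 1 + |t + r * s| := by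
      have hrs : |r * s| ≤ r := by
        rw [abs_mul, abs_of_nonneg hr]
        exact mul_le_of_le_one_right hr hs1
      have := abs_sub_abs_le_abs_add t (r * s)
      linarith
    calc ‖(1 - s ^ 2) ^ α • G (t + r * s)‖ = (1 - s ^ 2) ^ α * ‖G (t + r * s)‖ := by
          rw [norm_smul, norm_of_nonneg (rpow_nonneg hs2 α)]
      _ ≤ 1 * (C / ((1 + |t|) / 2) ^ N) := by
          gcongr
          exact (hG _).trans (by gcongr)
      _ = C * 2 ^ N / (1 + |t|) ^ N := by rw [one_mul, div_pow, div_div_eq_mul_div]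
  calc ‖gegenbauerMean α G t r‖ ≤ C * 2 ^ N / (1 + |t|) ^ N * |1 - (-1)| :=
        intervalIntegral.norm_integral_le_of_norm_le_const hintegrand
    _ = C * 2 ^ N * 2 / (1 + |t|) ^ N := by rw [show |(1 : ℝ) - (-1)| = 2 by norm_num]; ring

theorem exists_norm_gegenbauerMean_le {α : ℝ} (hα : 0 ≤ α) {G : 𝓢(ℝ, E)}
    (hG : ∀ k : ℕ, ∫ y, y ^ k • G y = 0) (N : ℕ) :
    ∃ C, 0 ≤ C ∧ ∀ t r, 0 ≤ r →
      ‖gegenbauerMean α G t r‖ ≤ C * (1 + |t|) ^ (-(α + 1)) / (1 + |(|t| - r)|) ^ N := by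
  obtain ⟨C₁, hC₁, hlarge⟩ := exists_norm_gegenbauerMean_le_rpow_div hα hG N
  obtain ⟨C₂, hC₂, hsmall⟩ :=
    exists_norm_gegenbauerMean_le_div_of_two_mul_le hα G (⌈α + 1⌉₊ + N)
  refine ⟨C₁ * 2 ^ (α + 1) + C₂ * 2 ^ N, by positivity, fun t r hr ↦ ?_⟩
  have hT : 1 ≤ 1 + |t| := le_add_of_nonneg_right (abs_nonneg t)
  have hT0 : 0 < 1 + |t| := by positivity
  rcases le_total (2 * r) (1 + |t|) with hrt | hrt
  · have hD : 1 + |(|t| - r)| ≤ 2 * (1 + |t|) := by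
      have : |(|t| - r)| ≤ 1 + |t| := abs_le.2 ⟨by linarith [abs_nonneg t], by linarith⟩
      linarith
    calc ‖gegenbauerMean α G t r‖ ≤ C₂ / ((1 + |t|) ^ ⌈α + 1⌉₊ * (1 + |t|) ^ N) :=
          (hsmall t r hr hrt).trans_eq (by rw [pow_add])
      _ ≤ C₂ / ((1 + |t|) ^ (α + 1) * ((1 + |(|t| - r)|) / 2) ^ N) := by
          gcongr
          exacts [rpow_le_pow hT (Nat.le_ceil _), by linarith]
      _ = C₂ * 2 ^ N * (1 + |t|) ^ (-(α + 1)) / (1 + |(|t| - r)|) ^ N := by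
          rw [div_pow, rpow_neg hT0.le]
          field_simp
      _ ≤ _ := by gcongr; exact le_add_of_nonneg_left (by positivity)
  · calc ‖gegenbauerMean α G t r‖ ≤ C₁ * r ^ (-(α + 1)) / (1 + |(|t| - r)|) ^ N :=
          hlarge t r (by linarith)
      _ ≤ C₁ * ((1 + |t|) / 2) ^ (-(α + 1)) / (1 + |(|t| - r)|) ^ N := by
          gcongr ?_ * ?_ / ?_
          exact rpow_le_rpow_of_nonpos (by positivity) (by linarith) (by linarith)
      _ = C₁ * 2 ^ (α + 1) * (1 + |t|) ^ (-(α + 1)) / (1 + |(|t| - r)|) ^ N := by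
          rw [div_rpow hT0.le zero_le_two, rpow_neg zero_le_two, div_inv_eq_mul]
          ring
      _ ≤ _ := by gcongr; exact le_add_of_nonneg_right (by positivity)

end GegenbauerMean

lemma integral_pow_smul_eq_zero_of_fourier_eventuallyEq_zero {E : Type*} [NormedAddCommGroup E]
    [NormedSpace ℂ E] {G : 𝓢(ℝ, E)} (hG : 𝓕 (G : ℝ → E) =ᶠ[𝓝 0] 0) (k : ℕ) :
    ∫ y, y ^ k • G y = 0 := by
  have hderiv : iteratedDeriv k (𝓕 (G : ℝ → E)) 0 = 0 := by
    rw [hG.iteratedDeriv_eq k]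
    simp
  rw [Real.iteratedDeriv_fourier (N := ⊤) (fun j _ ↦ integrable_pow_smul G j) le_top,
    Real.fourier_eq] at hderiv
  have hscalar : ∀ y : ℝ, (-2 * π * Complex.I * y) ^ k • G y
      = (-2 * π * Complex.I) ^ k • y ^ k • G y := fun y ↦ by
    rw [mul_pow, mul_smul, ← Complex.ofReal_pow, Complex.coe_smul]
  simp only [inner_zero_right, neg_zero, AddChar.map_zero_eq_one, one_smul, hscalar,
    integral_smul] at hderiv
  exact (smul_eq_zero.1 hderiv).resolve_left (pow_ne_zero k (by simp [pi_ne_zero]))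

theorem exists_norm_gegenbauerMean_fourierInv_le {E : Type*} [NormedAddCommGroup E]
    [NormedSpace ℂ E] [CompleteSpace E] {α : ℝ} (hα : 0 ≤ α) {g : 𝓢(ℝ, E)}
    (hg : (g : ℝ → E) =ᶠ[𝓝 0] 0) (N : ℕ) :
    ∃ C, 0 ≤ C ∧ ∀ t r, 0 ≤ r → ‖gegenbauerMean α (𝓕⁻ (g : ℝ → E)) t r‖
      ≤ C * (1 + |t|) ^ (-(α + 1)) / (1 + |(|t| - r)|) ^ N := by
  rw [← SchwartzMap.fourierInv_coe]
  refine exists_norm_gegenbauerMean_le hα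
    (integral_pow_smul_eq_zero_of_fourier_eventuallyEq_zero ?_) N
  rwa [← SchwartzMap.fourier_coe, FourierTransform.fourier_fourierInv_eq]

section SphericalMean

open Module (finrank)

variable {F : Type*} [NormedAddCommGroup F] [NormedSpace ℝ F]

lemma integral_Ioi_eq_half_smul_integral_comp_abs (f : ℝ → F) :
    ∫ b in Set.Ioi (0 : ℝ), f b = (1 / 2 : ℝ) • ∫ b : ℝ, f |b| := by
  have hradial := integral_fun_norm_addHaar (volume : Measure ℝ) f
  simp only [norm_eq_abs, Module.finrank_self, tsub_self, pow_zero, one_smul, Measure.real,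
    Real.volume_ball] at hradial
  simp [hradial, smul_smul]

lemma integral_eucl_succ {k : ℕ} (f : ℝ → Eucl k → F) :
    ∫ ξ : Eucl (k + 1), f (ξ 0) (WithLp.toLp 2 fun i ↦ ξ i.succ) = ∫ p : ℝ × Eucl k, f p.1 p.2 := by
  have htail := (MeasurePreserving.id (volume : Measure ℝ)).prod
    (PiLp.volume_preserving_toLp (Fin k))
  have hsplit := (htail.comp (volume_preserving_piFinSuccAbove (fun _ : Fin (k + 1) ↦ ℝ) 0)).comp
    (PiLp.volume_preserving_ofLp (Fin (k + 1)))
  exact hsplit.integral_comp' (f := (MeasurableEquiv.toLp 2 (Fin (k + 1) → ℝ)).symm.trans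
    ((MeasurableEquiv.piFinSuccAbove (fun _ ↦ ℝ) 0).trans
      (.prodCongr (.refl ℝ) (.toLp 2 (Fin k → ℝ))))) fun p ↦ f p.1 p.2

lemma norm_eucl_succ {k : ℕ} (ξ : Eucl (k + 1)) :
    ‖ξ‖ = √(ξ 0 ^ 2 + ‖(WithLp.toLp 2 fun i ↦ ξ i.succ : Eucl k)‖ ^ 2) := by
  rw [EuclideanSpace.norm_sq_eq, EuclideanSpace.norm_eq, Fin.sum_univ_succ, norm_eq_abs, sq_abs]

variable {E : Type*} [NormedAddCommGroup E] [InnerProductSpace ℝ E] [FiniteDimensional ℝ E]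
  [MeasurableSpace E] [BorelSpace E]

lemma integral_comp_inner_norm_eq_integral_prod {k : ℕ} (hE : finrank ℝ E = k + 1) {e : E}
    (he : ‖e‖ = 1) (H : ℝ → ℝ → F) :
    ∫ ξ : E, H ⟪e, ξ⟫ ‖ξ‖ = ∫ p : ℝ × Eucl k, H p.1 √(p.1 ^ 2 + ‖p.2‖ ^ 2) := by
  obtain ⟨b, hb⟩ : ∃ b : OrthonormalBasis (Fin (k + 1)) ℝ E, b 0 = e := by
    have he' : Orthonormal ℝ (({0} : Set (Fin (k + 1))).domRestrict fun _ ↦ e) :=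
      ⟨fun _ ↦ he, fun i j hij ↦ (hij (Subsingleton.elim i j)).elim⟩
    obtain ⟨b, hb⟩ := he'.exists_orthonormalBasis_extension_of_card_eq (by simpa using hE)
    exact ⟨b, hb 0 rfl⟩
  calc ∫ ξ : E, H ⟪e, ξ⟫ ‖ξ‖ = ∫ ξ : E, H (b.repr ξ 0) ‖b.repr ξ‖ := by
        simp only [b.repr_apply_apply, hb, LinearIsometryEquiv.norm_map]
    _ = ∫ ξ : Eucl (k + 1), H (ξ 0) ‖ξ‖ :=
        b.measurePreserving_repr.integral_comp' (f := b.measurableEquiv) fun ξ ↦ H (ξ 0) ‖ξ‖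
    _ = _ := by
        simp only [norm_eucl_succ]
        exact integral_eucl_succ fun a η ↦ H a √(a ^ 2 + ‖η‖ ^ 2)

lemma integrable_norm_pow_smul_comp_sqrt (j : ℕ) {H : ℝ → ℝ → F} (hH : Continuous ↿H) {R : ℝ}
    (hR : ∀ a ρ, R ≤ ρ → H a ρ = 0) :
    Integrable fun p : ℝ × E ↦ ‖p.2‖ ^ j • H p.1 √(p.1 ^ 2 + ‖p.2‖ ^ 2) := by
  have : Continuous fun p : ℝ × E ↦ H p.1 √(p.1 ^ 2 + ‖p.2‖ ^ 2) :=
    hH.comp (by fun_prop : Continuous fun p : ℝ × E ↦ (p.1, √(p.1 ^ 2 + ‖p.2‖ ^ 2)))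
  refine Continuous.integrable_of_hasCompactSupport (by fun_prop)
    (.of_support_subset_isCompact (isCompact_closedBall 0 R) fun p hp ↦ ?_)
  have hlt : √(p.1 ^ 2 + ‖p.2‖ ^ 2) < R := lt_of_not_ge fun h ↦ hp <| by
    simp only [hR _ _ h, smul_zero]
  rw [mem_closedBall_zero_iff, Prod.norm_def]
  exact max_le ((abs_le_sqrt (le_add_of_nonneg_right (sq_nonneg _))).trans hlt.le)
    ((le_sqrt_of_sq_le (le_add_of_nonneg_left (sq_nonneg _))).trans hlt.le)

lemma integral_comp_sqrt_eq_smul_integral_abs_pow [Nontrivial E] {H : ℝ → ℝ → F}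
    (hH : Continuous ↿H) {R : ℝ} (hR : ∀ a ρ, R ≤ ρ → H a ρ = 0) :
    ∫ p : ℝ × E, H p.1 √(p.1 ^ 2 + ‖p.2‖ ^ 2)
      = (finrank ℝ E * volume.real (Metric.ball (0 : E) 1) / 2) •
          ∫ p : ℝ × ℝ, |p.2| ^ (finrank ℝ E - 1) • H p.1 √(p.1 ^ 2 + p.2 ^ 2) := by
  have hradial : ∀ a : ℝ, ∫ η : E, H a √(a ^ 2 + ‖η‖ ^ 2)
      = (finrank ℝ E * volume.real (Metric.ball (0 : E) 1) / 2) •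
          ∫ b : ℝ, |b| ^ (finrank ℝ E - 1) • H a √(a ^ 2 + b ^ 2) := fun a ↦ by
    rw [integral_fun_norm_addHaar volume fun b ↦ H a √(a ^ 2 + b ^ 2),
      integral_Ioi_eq_half_smul_integral_comp_abs, ← Nat.cast_smul_eq_nsmul ℝ, smul_smul, smul_smul]
    simp only [sq_abs, mul_one_div]
  have hintE : Integrable fun p : ℝ × E ↦ H p.1 √(p.1 ^ 2 + ‖p.2‖ ^ 2) := by
    simpa using integrable_norm_pow_smul_comp_sqrt (E := E) 0 hH hR
  have hint : Integrable fun p : ℝ × ℝ ↦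
      |p.2| ^ (finrank ℝ E - 1) • H p.1 √(p.1 ^ 2 + p.2 ^ 2) := by
    simpa using integrable_norm_pow_smul_comp_sqrt (E := ℝ) (finrank ℝ E - 1) hH hR
  rw [Measure.volume_eq_prod, Measure.volume_eq_prod, integral_prod _ hintE, integral_prod _ hint]
  simp only [hradial, integral_smul]

lemma integral_abs_pow_smul_eq_integral_polar (k : ℕ) {H : ℝ → ℝ → F} (hH : Continuous ↿H) {R : ℝ}
    (hR : ∀ a ρ, R ≤ ρ → H a ρ = 0) :
    ∫ p : ℝ × ℝ, |p.2| ^ k • H p.1 √(p.1 ^ 2 + p.2 ^ 2)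
      = ∫ θ in Set.Ioo (-π) π, |Real.sin θ| ^ k •
          ∫ ρ in Set.Ioi (0 : ℝ), ρ ^ (k + 1) • H (ρ * Real.cos θ) ρ := by
  set Φ : ℝ × ℝ → F := fun p ↦ |Real.sin p.2| ^ k • p.1 ^ (k + 1) • H (p.1 * Real.cos p.2) p.1
  have hΦ : Continuous Φ := by
    have : Continuous fun p : ℝ × ℝ ↦ H (p.1 * Real.cos p.2) p.1 :=
      hH.comp (by fun_prop : Continuous fun p : ℝ × ℝ ↦ (p.1 * Real.cos p.2, p.1))
    fun_prop
  have hpolar : ∀ p ∈ polarCoord.target,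
      p.1 • |(polarCoord.symm p).2| ^ k •
        H (polarCoord.symm p).1 √((polarCoord.symm p).1 ^ 2 + (polarCoord.symm p).2 ^ 2)
        = Φ p := fun p hp ↦ by
    have hp0 : 0 < p.1 := hp.1
    have hnorm : √((p.1 * Real.cos p.2) ^ 2 + (p.1 * Real.sin p.2) ^ 2) = p.1 := by
      rw [mul_pow, mul_pow, ← mul_add, Real.cos_sq_add_sin_sq, mul_one, sqrt_sq hp0.le]
    simp only [polarCoord_symm_apply, hnorm, smul_smul, Φ, abs_mul, abs_of_pos hp0]
    congr 1
    ring
  have hint : IntegrableOn Φ (Set.Ioi 0 ×ˢ Set.Ioo (-π) π) := by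
    refine IntegrableOn.of_forall_sdiff_eq_zero (s := Set.Icc 0 R ×ˢ Set.Icc (-π) π)
      (hΦ.continuousOn.integrableOn_compact (isCompact_Icc.prod isCompact_Icc))
      (measurableSet_Ioi.prod measurableSet_Ioo) fun p hp ↦ ?_
    have hRp : R ≤ p.1 := le_of_not_gt fun h ↦
      hp.2 ⟨⟨le_of_lt hp.1.1, h.le⟩, Set.Ioo_subset_Icc_self hp.1.2⟩
    simp only [Φ, hR _ _ hRp, smul_zero]
  rw [← integral_comp_polarCoord_symm,
    setIntegral_congr_fun polarCoord.open_target.measurableSet hpolar, polarCoord_target]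
  rw [IntegrableOn, Measure.volume_eq_prod, ← Measure.prod_restrict] at hint
  rw [Measure.volume_eq_prod, ← Measure.prod_restrict, integral_prod_symm _ hint]
  simp only [Φ, integral_smul]

lemma image_cos_Ioo : Real.cos '' Set.Ioo 0 π = Set.Ioo (-1) 1 := by
  refine Set.Subset.antisymm ?_ fun s hs ↦
    ⟨Real.arccos s, ⟨Real.arccos_pos.2 hs.2, ?_⟩, Real.cos_arccos hs.1.le hs.2.le⟩
  · rintro _ ⟨θ, hθ, rfl⟩
    constructor
    · simpa using Real.cos_lt_cos_of_nonneg_of_le_pi hθ.1.le le_rfl hθ.2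
    · simpa using Real.cos_lt_cos_of_nonneg_of_le_pi le_rfl hθ.2.le hθ.1
  · exact (Real.arccos_le_pi s).lt_of_ne fun h ↦ hs.1.not_ge (Real.arccos_eq_pi.1 h)

lemma integral_Ioo_eq_two_smul_of_even {f : ℝ → F} (hf : ∀ x, f |x| = f x) (a : ℝ) :
    ∫ x in Set.Ioo (-a) a, f x = (2 : ℝ) • ∫ x in Set.Ioo 0 a, f x := by
  have hhalf := integral_Ioi_eq_half_smul_integral_comp_abs ((Set.Iio a).indicator f)
  have habs : ∀ x, (Set.Iio a).indicator f |x| = (Set.Ioo (-a) a).indicator f x := fun x ↦ by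
    simp only [Set.indicator_apply, Set.mem_Iio, Set.mem_Ioo, abs_lt, hf]
  simp only [habs, integral_indicator measurableSet_Ioo] at hhalf
  rw [setIntegral_indicator measurableSet_Iio, Set.Ioi_inter_Iio] at hhalf
  rw [hhalf, smul_smul]
  norm_num

lemma integral_abs_sin_pow_smul_comp_cos (k : ℕ) (P : ℝ → F) :
    ∫ θ in Set.Ioo (-π) π, |Real.sin θ| ^ k • P (Real.cos θ)
      = (2 : ℝ) • ∫ s in (-1 : ℝ)..1, (1 - s ^ 2) ^ (((k : ℝ) - 1) / 2) • P s := by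
  rw [integral_Ioo_eq_two_smul_of_even, intervalIntegral.integral_of_le (by norm_num),
    integral_Ioc_eq_integral_Ioo, ← image_cos_Ioo,
    integral_image_eq_integral_abs_deriv_smul measurableSet_Ioo
      (fun θ _ ↦ (Real.hasDerivAt_cos θ).hasDerivWithinAt)
      (Real.injOn_cos.mono Set.Ioo_subset_Icc_self)]
  · congr 1
    refine setIntegral_congr_fun measurableSet_Ioo fun θ hθ ↦ ?_
    have hsin : 0 < Real.sin θ := Real.sin_pos_of_mem_Ioo hθ
    have hpow : Real.sin θ * (1 - Real.cos θ ^ 2) ^ (((k : ℝ) - 1) / 2) = Real.sin θ ^ k := by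
      rw [← Real.sin_sq, ← Real.rpow_natCast _ 2, ← rpow_mul hsin.le, ← Real.rpow_natCast _ k]
      nth_rw 1 [← Real.rpow_one (Real.sin θ)]
      rw [← rpow_add hsin]
      congr 1
      push_cast
      ring
    simp only [abs_neg, abs_of_pos hsin, smul_smul, hpow]
  · intro θ
    rcases abs_choice θ with h | h <;> rw [h]
    rw [Real.sin_neg, abs_neg, Real.cos_neg]

theorem integral_comp_inner_norm_eq {k : ℕ} (hE : finrank ℝ E = k + 2) {e : E} (he : ‖e‖ = 1)
    {H : ℝ → ℝ → F} (hH : Continuous ↿H) {R : ℝ} (hR : ∀ a ρ, R ≤ ρ → H a ρ = 0) :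
    ∫ ξ : E, H ⟪e, ξ⟫ ‖ξ‖
      = ((k + 1) * volume.real (Metric.ball (0 : Eucl (k + 1)) 1)) •
          ∫ s in (-1 : ℝ)..1, (1 - s ^ 2) ^ (((k : ℝ) - 1) / 2) •
            ∫ ρ in Set.Ioi (0 : ℝ), ρ ^ (k + 1) • H (ρ * s) ρ := by
  rw [integral_comp_inner_norm_eq_integral_prod hE he H,
    integral_comp_sqrt_eq_smul_integral_abs_pow hH hR, finrank_euclideanSpace_fin,
    Nat.add_sub_cancel, integral_abs_pow_smul_eq_integral_polar k hH hR,
    integral_abs_sin_pow_smul_comp_cos k fun s ↦ ∫ ρ in Set.Ioi (0 : ℝ), ρ ^ (k + 1) • H (ρ * s) ρ,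
    smul_smul, div_mul_cancel₀ _ two_ne_zero, Nat.cast_add_one]

end SphericalMean

section HalfWave

variable {k : ℕ} {φ : ℝ → ℂ}

lemma integral_Ioi_pow_smul_exp_eq_fourierInv {R : ℝ} (hsupp : Function.support φ ⊆ Set.Icc 0 R)
    (t r : ℝ) :
    ∫ ρ in Set.Ioi (0 : ℝ), ρ ^ (k + 1) • (Complex.exp (2 * π * Complex.I * t * ρ) *
        Complex.exp (2 * π * Complex.I * ((r * ρ : ℝ) : ℂ)) * φ ρ)
      = 𝓕⁻ (fun ρ ↦ ρ ^ (k + 1) • φ ρ) (t + r) := by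
  have hzero : ∀ ρ ∉ Set.Ioi (0 : ℝ), ρ ^ (k + 1) • φ ρ = 0 := fun ρ hρ ↦ by
    rcases (Set.notMem_Ioi.1 hρ).eq_or_lt with rfl | hneg
    · rw [zero_pow k.succ_ne_zero, zero_smul]
    · rw [Function.notMem_support.1 fun h ↦ (hsupp h).1.not_gt hneg, smul_zero]
  rw [Real.fourierInv_eq', ← setIntegral_eq_integral_of_forall_compl_eq_zero
    (fun ρ hρ ↦ by rw [hzero ρ hρ, smul_zero] :
      ∀ ρ ∉ Set.Ioi 0, Complex.exp (↑(2 * π * ⟪ρ, t + r⟫) * Complex.I) • ρ ^ (k + 1) • φ ρ = 0)]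
  congr 1 with ρ
  rw [← Complex.exp_add, smul_comm, smul_eq_mul, RCLike.inner_apply, conj_trivial]
  congr 3
  push_cast
  ring

lemma waveProp_eq_smul_gegenbauerMean (hφ : Continuous φ) {R : ℝ}
    (hsupp : Function.support φ ⊆ Set.Icc 0 R) {f : Eucl (k + 2) → ℂ} (hf : ∀ ξ, 𝓕 f ξ = φ ‖ξ‖)
    (t : ℝ) (x : Eucl (k + 2)) :
    waveProp f t x = ((k + 1) * volume.real (Metric.ball (0 : Eucl (k + 1)) 1)) •
      gegenbauerMean (((k : ℝ) - 1) / 2) (𝓕⁻ fun ρ ↦ ρ ^ (k + 1) • φ ρ) t ‖x‖ := by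
  obtain ⟨e, he, hx⟩ : ∃ e : Eucl (k + 2), ‖e‖ = 1 ∧ x = ‖x‖ • e := by
    rcases eq_or_ne x 0 with rfl | hx
    · simpa using exists_norm_eq (Eucl (k + 2)) zero_le_one
    · exact ⟨‖x‖⁻¹ • x, norm_smul_inv_norm hx, (smul_inv_smul₀ (norm_ne_zero_iff.2 hx) x).symm⟩
  set H : ℝ → ℝ → ℂ := fun a ρ ↦ Complex.exp (2 * π * Complex.I * t * ρ) *
    Complex.exp (2 * π * Complex.I * ((‖x‖ * a : ℝ) : ℂ)) * φ ρ
  have hH : Continuous ↿H := by fun_prop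
  have hR : ∀ a ρ, R + 1 ≤ ρ → H a ρ = 0 := fun a ρ hρ ↦ by
    have : φ ρ = 0 := Function.notMem_support.1 fun h ↦ by linarith [(hsupp h).2]
    simp only [H, this, mul_zero]
  calc waveProp f t x = ∫ ξ : Eucl (k + 2), H ⟪e, ξ⟫ ‖ξ‖ := by
        rw [waveProp]
        congr 1 with ξ
        rw [hf ξ, congrArg (⟪·, ξ⟫) hx, real_inner_smul_left]
    _ = _ := integral_comp_inner_norm_eq finrank_euclideanSpace_fin he hH hR
    _ = _ := by
        simp only [H, gegenbauerMean, ← integral_Ioi_pow_smul_exp_eq_fourierInv hsupp]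
        ring_nf

end HalfWave

theorem radial_bump_decay_general (n : ℕ) (hn : 3 ≤ n) {a b : ℝ} (ha : 0 < a) (φ : ℝ → ℂ)
    (hφ : ContDiff ℝ (⊤ : ℕ∞) φ) (hsupp : Function.support φ ⊆ Set.Icc a b) (M : ℕ) :
    ∃ C : ℝ, 0 < C ∧ ∀ f : Eucl n → ℂ, (∀ ξ : Eucl n, 𝓕 f ξ = φ ‖ξ‖) →
      ∀ (t : ℝ) (x : Eucl n), ‖waveProp f t x‖ ≤
        C * (1 + |t|) ^ (-(((n : ℝ) - 1) / 2)) * (1 + |(|t|) - ‖x‖|) ^ (-(M : ℝ)) := by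
  obtain ⟨k, rfl⟩ := Nat.exists_eq_add_of_le' (Nat.le_of_succ_le hn)
  have hα : 0 ≤ ((k : ℝ) - 1) / 2 :=
    div_nonneg (sub_nonneg.2 (Nat.one_le_cast.2 (by lia))) zero_le_two
  have hsmooth : ContDiff ℝ (⊤ : ℕ∞) fun ρ ↦ ρ ^ (k + 1) • φ ρ := by fun_prop
  have hcomp : HasCompactSupport fun ρ ↦ ρ ^ (k + 1) • φ ρ :=
    .of_support_subset_isCompact isCompact_Icc
      fun _ hρ ↦ hsupp (right_ne_zero_of_smul hρ)
  have hzero : (fun ρ ↦ ρ ^ (k + 1) • φ ρ) =ᶠ[𝓝 0] 0 := by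
    filter_upwards [Iio_mem_nhds ha] with ρ hρ
    rw [Function.notMem_support.1 fun h ↦ (hsupp h).1.not_gt hρ, smul_zero, Pi.zero_apply]
  obtain ⟨C, hC, hdecay⟩ := exists_norm_gegenbauerMean_fourierInv_le hα
    (g := hcomp.toSchwartzMap hsmooth) hzero M
  set c : ℝ := (k + 1) * volume.real (Metric.ball (0 : Eucl (k + 1)) 1)
  refine ⟨|c| * C + 1, by positivity, fun f hf t x ↦ ?_⟩
  rw [waveProp_eq_smul_gegenbauerMean hφ.continuous
    (hsupp.trans (Set.Icc_subset_Icc_left ha.le)) hf, norm_smul, norm_eq_abs]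
  calc _ ≤ |c| * (C * (1 + |t|) ^ (-(((k : ℝ) - 1) / 2 + 1)) / (1 + |(|t| - ‖x‖)|) ^ M) :=
        mul_le_mul_of_nonneg_left (hdecay t ‖x‖ (norm_nonneg x)) (abs_nonneg c)
    _ = |c| * C * (1 + |t|) ^ (-((((k + 2 : ℕ) : ℝ) - 1) / 2)) *
          (1 + |(|t|) - ‖x‖|) ^ (-(M : ℝ)) := by
        rw [rpow_neg (by positivity) (M : ℝ), Real.rpow_natCast]
        push_cast
        ring_nf
    _ ≤ _ := by gcongr; exact le_add_of_nonneg_right zero_le_one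

/-- pointwise decay for radial unit frequency bump data. -/
theorem radial_bump_decay (n : ℕ) (hn : 3 ≤ n) (φ : ℝ → ℝ)
    (hφ : ContDiff ℝ (⊤ : ℕ∞) φ)
    (hsupp : Function.support φ ⊆ Set.Ioo (1 / 2) 2) (M : ℕ) :
    ∃ C : ℝ, 0 < C ∧ ∀ f : Eucl n → ℂ, IsRadial f →
      (∀ ξ : Eucl n, 𝓕 f ξ = ((φ ‖ξ‖ : ℝ) : ℂ)) →
      ∀ (t : ℝ) (x : Eucl n),
        ‖waveProp f t x‖ ≤
          C * (1 + |t|) ^ (-(((n : ℝ) - 1) / 2)) * (1 + |(|t|) - ‖x‖|) ^ (-(M : ℝ)) := by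
  obtain ⟨C, hC, hdecay⟩ := radial_bump_decay_general n hn one_half_pos (fun ρ ↦ (φ ρ : ℂ))
    (Complex.ofRealCLM.contDiff.comp hφ) (b := 2)
    (fun ρ hρ ↦ Set.Ioo_subset_Icc_self (hsupp fun h ↦ hρ (Complex.ofReal_eq_zero.2 h))) M
  exact ⟨C, hC, fun f _ ↦ hdecay f⟩
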